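/- Let n ≥ 2. For ε = (ε_1, …, ε_n) ∈ {0,1}^n set m_ε := 2(ε_1 + ⋯ + ε_{n−1}) + 2^{n+1} ε_n. Let φ' : {0,1}^{n−1} → {0, …, 2^{n−1}−1} be any bijection such that φ'(ε) ≤ φ'(δ) whenever ε_1 + ⋯ + ε_{n−1} ≤ δ_1 + ⋯ + δ_{n−1}, and for 0 ≤ i ≤ 2^n − 1 define m_i := m_ε for the unique ε ∈ {0,1}^n with φ'(ε_1,…,ε_{n−1}) + 2^{n−1} ε_n = i. Then: (a) ∑_{i=0}^{2^n−1} m_i = 2^n (2^n + n − 1); in particular, if r = 2^n − 2 then ∑_{i=0}^{r+1} m_i = (r+2)(n+r+1); and (b) for every integer r with 2^{n−1} ≤ r + 1 < 2^n, one has ∑_{i=0}^{r+1} m_i ≤ 2(r+2)(n+r). -/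

import Mathlib

/-!
Write `k = n - 1` and `N = 2 ^ k`. Transporting the weights along `φ` gives numbers `w j` (`j < N`)
with `m j = 2 w j` and `m (N + j) = 2 w j + 4 N`. Pairing each tuple with its complement shows that
twice the total weight is `k N` (`two_mul_sum_boolWeight`), so the sum of the first `N + s` degrees,
`s ≤ N`, equals `k N + 2 ∑_{j < s} w j + 4 N s` (`sum_degrees`).

For `s = N` this is (a). For (b), with `r + 2 = N + s` and `1 ≤ s ≤ N`, the crude bound `w j ≤ k`
is already enough: the difference of the two sides is then at least
`2 N (N - 1) + 2 s (s - 1) + N k ≥ 0`.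
-/

/-- The number of `true` entries (the "length" `|ε|`) of a tuple `ε ∈ {0,1}^m`. -/
def boolWeight {m : ℕ} (ε : Fin m → Bool) : ℕ :=
  (Finset.univ.filter fun i => ε i = true).card

theorem boolWeight_add_boolWeight_not {k : ℕ} (ε : Fin k → Bool) :
    boolWeight ε + boolWeight (fun i => !ε i) = k := by
  have h := Finset.card_filter_add_card_filter_not (s := (Finset.univ : Finset (Fin k)))
    (fun i => ε i = true)
  simpa [boolWeight] using h

theorem boolWeight_le {k : ℕ} (ε : Fin k → Bool) : boolWeight ε ≤ k := by
  have := boolWeight_add_boolWeight_not ε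
  omega

theorem two_mul_sum_boolWeight (k : ℕ) :
    2 * ∑ ε : Fin k → Bool, boolWeight ε = k * 2 ^ k := by
  have hinv : Function.Involutive (fun (ε : Fin k → Bool) i => !ε i) := fun ε => by simp
  have h : ∑ ε : Fin k → Bool, boolWeight (fun i => !ε i) = ∑ ε : Fin k → Bool, boolWeight ε :=
    Equiv.sum_comp hinv.toPerm boolWeight
  calc 2 * ∑ ε : Fin k → Bool, boolWeight ε
      = ∑ ε : Fin k → Bool, (boolWeight ε + boolWeight (fun i => !ε i)) := by
        rw [Finset.sum_add_distrib, h, two_mul]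
    _ = k * 2 ^ k := by simp [boolWeight_add_boolWeight_not, mul_comm]

/-- The partial sums of the degrees beyond the first half, in terms of the weights `w j` read off
along `φ`. The function `w` is only meaningful below `2 ^ k`. -/
theorem sum_degrees {k : ℕ} (φ : (Fin k → Bool) ≃ Fin (2 ^ k)) (m : ℕ → ℕ)
    (hm : ∀ (ε : Fin k → Bool) (b : Bool),
      m ((φ ε : ℕ) + 2 ^ k * (if b then 1 else 0)) =
        2 * boolWeight ε + 2 ^ (k + 2) * (if b then 1 else 0)) :
    ∃ w : ℕ → ℕ, (∀ j < 2 ^ k, w j ≤ k) ∧ 2 * ∑ j ∈ Finset.range (2 ^ k), w j = k * 2 ^ k ∧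
      ∀ s ≤ 2 ^ k, ∑ i ∈ Finset.range (2 ^ k + s), m i =
        k * 2 ^ k + 2 * ∑ j ∈ Finset.range s, w j + 4 * 2 ^ k * s := by
  let w : ℕ → ℕ := fun j => if h : j < 2 ^ k then boolWeight (φ.symm ⟨j, h⟩) else 0
  have hw : ∀ j (h : j < 2 ^ k), w j = boolWeight (φ.symm ⟨j, h⟩) := fun j h => dif_pos h
  have hlow : ∀ j < 2 ^ k, m j = 2 * w j := by
    intro j h
    have := hm (φ.symm ⟨j, h⟩) false
    simpa [hw j h] using this
  have hhigh : ∀ j < 2 ^ k, m (2 ^ k + j) = 2 * w j + 4 * 2 ^ k := by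
    intro j h
    have := hm (φ.symm ⟨j, h⟩) true
    rw [hw j h, add_comm (2 ^ k) j]
    simp only [Equiv.apply_symm_apply, if_true, mul_one] at this
    rw [this]
    ring
  have hsum : 2 * ∑ j ∈ Finset.range (2 ^ k), w j = k * 2 ^ k := by
    rw [← two_mul_sum_boolWeight, ← Fin.sum_univ_eq_sum_range, ← Equiv.sum_comp φ.symm]
    congr 1
    exact Finset.sum_congr rfl fun j _ => hw j j.2
  refine ⟨w, fun j h => hw j h ▸ boolWeight_le _, hsum, fun s hs => ?_⟩
  have h1 : ∑ i ∈ Finset.range (2 ^ k), m i = k * 2 ^ k := by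
    rw [← hsum, Finset.mul_sum]
    exact Finset.sum_congr rfl fun j hj => hlow j (Finset.mem_range.1 hj)
  have h2 : ∑ j ∈ Finset.range s, m (2 ^ k + j) =
      ∑ j ∈ Finset.range s, (2 * w j + 4 * 2 ^ k) :=
    Finset.sum_congr rfl fun j hj => hhigh j ((Finset.mem_range.1 hj).trans_le hs)
  rw [Finset.sum_range_add, h1, h2, Finset.sum_add_distrib, ← Finset.mul_sum]
  simp only [Finset.sum_const, Finset.card_range, smul_eq_mul]
  ring

/-- Lemma on the degrees `m_i` of the polynomials `c_i` in the CTO-type construction: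
for `ε = (ε₁,…,εₙ) ∈ {0,1}ⁿ` one sets `m_ε = 2(ε₁ + ⋯ + ε_{n-1}) + 2^{n+1} εₙ`, and the `m_i`
(`0 ≤ i ≤ 2ⁿ - 1`) are obtained via a bijection `φ' : {0,1}^{n-1} ≃ {0,…,2^{n-1}-1}`
which is monotone with respect to the number of nonzero entries, through
`i = φ'(ε₁,…,ε_{n-1}) + 2^{n-1} εₙ`.  Then:
(a) `∑_{i=0}^{2ⁿ-1} m_i = 2ⁿ (2ⁿ + n - 1)`; in particular for `r = 2ⁿ - 2` one has
`∑_{i=0}^{r+1} m_i = (r+2)(n+r+1)`; and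
(b) for every `r` with `2^{n-1} ≤ r+1 < 2ⁿ`, `∑_{i=0}^{r+1} m_i ≤ 2(r+2)(n+r)`. -/
theorem sum_of_degrees_in_CTO_construction
    (n : ℕ) (hn : 2 ≤ n)
    (φ : (Fin (n-1) → Bool) ≃ Fin (2^(n-1)))
    (hφ : ∀ ε δ : Fin (n-1) → Bool, boolWeight ε < boolWeight δ → φ ε < φ δ)
    (m : ℕ → ℕ)
    (hm : ∀ (ε : Fin (n-1) → Bool) (b : Bool),
      m ((φ ε : ℕ) + 2^(n-1) * (if b then 1 else 0)) =
        2 * boolWeight ε + 2^(n+1) * (if b then 1 else 0)) :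
    (∑ i ∈ Finset.range (2^n), m i = 2^n * (2^n + n - 1)) ∧
    (∀ r : ℕ, r = 2^n - 2 → ∑ i ∈ Finset.range (r+2), m i = (r+2) * (n+r+1)) ∧
    (∀ r : ℕ, 2^(n-1) ≤ r + 1 → r + 1 < 2^n →
      ∑ i ∈ Finset.range (r+2), m i ≤ 2*(r+2)*(n+r)) := by
  obtain ⟨k, rfl⟩ : ∃ k, n = k + 1 := ⟨n - 1, by omega⟩
  -- `k + 1 - 1` reduces to `k` definitionally, so `φ` and `hm` have the required types.
  obtain ⟨w, hwle, hwsum, hsum⟩ := sum_degrees (k := k) φ m hm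
  simp only [Nat.add_sub_cancel]
  have hpow : 2 ^ (k + 1) = 2 ^ k + 2 ^ k := by ring
  have hpos : 1 ≤ 2 ^ k := Nat.one_le_two_pow
  have hfull : ∑ i ∈ Finset.range (2 ^ (k + 1)), m i = 2 ^ (k + 1) * (2 ^ (k + 1) + k) := by
    rw [hpow, hsum _ le_rfl, hwsum]
    ring
  refine ⟨hfull, ?_, ?_⟩
  · intro r hr
    have hr2 : r + 2 = 2 ^ (k + 1) := by omega
    rw [hr2, hfull, ← hr2]
    ring
  · intro r hr1 hr2
    obtain ⟨t, ht⟩ : ∃ t, r + 2 = 2 ^ k + (t + 1) := ⟨r + 1 - 2 ^ k, by omega⟩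
    have hs : t + 1 ≤ 2 ^ k := by omega
    have hle : ∑ j ∈ Finset.range (t + 1), w j ≤ (t + 1) * k := by
      have := Finset.sum_le_card_nsmul (Finset.range (t + 1)) w k
        fun j hj => hwle j ((Finset.mem_range.1 hj).trans_le hs)
      simpa using this
    have hr : k + 1 + r = 2 ^ k + t + k := by omega
    rw [mul_assoc, hr, ht, hsum _ hs]
    -- Writing `N = M + 1` and `s = t + 1` makes all terms of the difference nonnegative.
    obtain ⟨M, hM⟩ : ∃ M, 2 ^ k = M + 1 := ⟨2 ^ k - 1, by omega⟩
    rw [hM]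
    nlinarith [Nat.zero_le (M * M), Nat.zero_le (t * t), Nat.zero_le (M * k)]
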